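/- arXiv:2208.10753 — 3 statements merged into one kernel-verified Lean document; each statement's English description precedes it below -/
import Mathlib

section
/- Let n be a positive integer, and for each i = 1,...,n let α_i, β_i, σ_i be real numbers with 0 < α_i < β_i ≤ 1 and σ_i² = α_i·β_i. Then for every z ∈ ℝⁿ, −(1/2)·Σ_{i=1}^n z_i²/σ_i² − (n/2)·log(2π) ≤ log ∏_{i=1}^n ∫_{α_i}^{β_i} (1/(β_i − α_i)) · (1/(√(2π)·σ)) · exp(−z_i²/(2σ²)) dσ. (This is the content of Theorem 1: the Neural-PCA objective with fixed variances σ_i is a lower bound of the log-likelihood of the hierarchical Bayesian model in which each standard deviation is uniformly distributed on [α_i, β_i]; the log-Jacobian-determinant term appears identically on both sides and cancels.) -/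
open Real MeasureTheory

/-- The centred Gaussian scale mixture with standard deviation uniform on `[a, b] ⊆ (0, 1]` has
density at `z` at least `exp (-z² / (2ab)) / √(2π)`. The exponential is bounded below by its
tangent line at `-z² / (2ab)`, the mean of `-z² / (2s²)` over `[a, b]`. -/
theorem exp_div_sqrt_le_integral_uniform_scale {a b : ℝ} (ha : 0 < a) (hab : a < b) (hb : b ≤ 1)
    (z : ℝ) :
    Real.exp (-z ^ 2 / (2 * (a * b))) / √(2 * π) ≤
      ∫ s in a..b, (1 / (b - a)) * (1 / (√(2 * π) * s)) * Real.exp (-z ^ 2 / (2 * s ^ 2)) := by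
  have hb0 : 0 < b := ha.trans hab
  have hba : 0 < b - a := sub_pos.2 hab
  have hπ : 0 < √(2 * π) := by positivity
  set c := -z ^ 2 / (2 * (a * b)) with hc
  set K := 1 / (b - a) * (1 / √(2 * π)) with hK
  have hK0 : 0 < K := by positivity
  have hpos : ∀ s ∈ Set.uIcc a b, 0 < s := fun s hs => by
    rw [Set.uIcc_of_le hab.le] at hs
    exact ha.trans_le hs.1
  have htangent : IntervalIntegrable
      (fun s => K * (Real.exp c * (1 - c - z ^ 2 / 2 * (s ^ 2)⁻¹))) volume a b := by
    refine ContinuousOn.intervalIntegrable fun s hs => ContinuousAt.continuousWithinAt ?_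
    have : s ^ 2 ≠ 0 := (pow_pos (hpos s hs) 2).ne'
    fun_prop (disch := assumption)
  have hdensity : IntervalIntegrable
      (fun s => (1 / (b - a)) * (1 / (√(2 * π) * s)) * Real.exp (-z ^ 2 / (2 * s ^ 2)))
      volume a b := by
    refine ContinuousOn.intervalIntegrable fun s hs => ContinuousAt.continuousWithinAt ?_
    have := hpos s hs
    have h1 : √(2 * π) * s ≠ 0 := by positivity
    have h2 : 2 * s ^ 2 ≠ 0 := by positivity
    fun_prop (disch := assumption)
  have hintegral : ∫ s in a..b, K * (Real.exp c * (1 - c - z ^ 2 / 2 * (s ^ 2)⁻¹)) =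
      Real.exp c / √(2 * π) := by
    rw [intervalIntegral.integral_eq_sub_of_hasDerivAt
      (f := fun s => K * (Real.exp c * ((1 - c) * s + z ^ 2 / 2 * s⁻¹))) ?_ htangent]
    · have hcab : c * (a * b) = -z ^ 2 / 2 := by rw [hc]; field_simp
      have hz : z ^ 2 / 2 = -c * (a * b) := by linarith
      rw [hz, hK]
      field_simp
      ring
    · intro s hs
      have := (((hasDerivAt_id s).const_mul (1 - c)).add
        ((hasDerivAt_inv (hpos s hs).ne').const_mul (z ^ 2 / 2))).const_mul (Real.exp c)
      refine (this.const_mul K).congr_deriv ?_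
      ring
  rw [← hintegral]
  refine intervalIntegral.integral_mono_on hab.le htangent hdensity fun s hs => ?_
  have hs0 : 0 < s := ha.trans_le hs.1
  have hline : Real.exp c * (1 - c - z ^ 2 / 2 * (s ^ 2)⁻¹) ≤ Real.exp (-z ^ 2 / (2 * s ^ 2)) := by
    have h := Real.add_one_le_exp (-z ^ 2 / (2 * s ^ 2) - c)
    calc _ = Real.exp c * (-z ^ 2 / (2 * s ^ 2) - c + 1) := by field_simp; ring
      _ ≤ Real.exp c * Real.exp (-z ^ 2 / (2 * s ^ 2) - c) := by gcongr
      _ = _ := by rw [← Real.exp_add]; ring_nf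
  calc _ ≤ K * Real.exp (-z ^ 2 / (2 * s ^ 2)) := by gcongr
    _ ≤ _ := by
      rw [hK]
      gcongr
      exact mul_le_of_le_one_right hπ.le (hs.2.trans hb)

/-- **Theorem 1 (paper), core inequality.** For each dimension `i` with
`0 < α i < β i ≤ 1` and `(σ i)^2 = α i * β i`, the fixed-variance Gaussian
log-likelihood `-(1/2) ∑ z_i²/σ_i² - (n/2) log(2π)` is a lower bound of the
log marginal likelihood of the hierarchical Bayesian model in which the
standard deviation of dimension `i` is uniform on `[α i, β i]`. -/
theorem neural_pca_lower_bound (n : ℕ) (hn : 0 < n)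
    (α β σ : Fin n → ℝ)
    (hαβ : ∀ i, 0 < α i ∧ α i < β i ∧ β i ≤ 1)
    (hσ : ∀ i, (σ i) ^ 2 = α i * β i)
    (z : Fin n → ℝ) :
    -(1 / 2) * (∑ i, (z i) ^ 2 / (σ i) ^ 2) - (n / 2 : ℝ) * Real.log (2 * π) ≤
      Real.log (∏ i, ∫ s in (α i)..(β i),
        (1 / (β i - α i)) * (1 / (Real.sqrt (2 * π) * s)) *
          Real.exp (-(z i) ^ 2 / (2 * s ^ 2))) := by
  have hle := fun i =>
    exp_div_sqrt_le_integral_uniform_scale (hαβ i).1 (hαβ i).2.1 (hαβ i).2.2 (z i)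
  have hpos : ∀ i, 0 < Real.exp (-(z i) ^ 2 / (2 * (α i * β i))) / √(2 * π) :=
    fun i => by positivity
  rw [Real.log_prod fun i _ => ((hpos i).trans_le (hle i)).ne']
  calc _ = ∑ i, Real.log (Real.exp (-(z i) ^ 2 / (2 * (α i * β i))) / √(2 * π)) := by
        have hlog : ∀ i, Real.log (Real.exp (-(z i) ^ 2 / (2 * (α i * β i))) / √(2 * π)) =
            -(1 / 2) * ((z i) ^ 2 / (σ i) ^ 2) - Real.log (2 * π) / 2 := fun i => by
          rw [Real.log_div (Real.exp_ne_zero _) (by positivity), Real.log_exp,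
            Real.log_sqrt (by positivity), hσ]
          ring
        simp only [hlog, Finset.sum_sub_distrib, ← Finset.mul_sum, Finset.sum_const,
          Finset.card_univ, Fintype.card_fin, nsmul_eq_mul]
        ring
    _ ≤ _ := Finset.sum_le_sum fun i _ => Real.log_le_log (hpos i) (hle i)
end

section
/- Let α, β, z be real numbers with 0 < α < β. Then −z²/(2αβ) + 1 − (β·log β − α·log α)/(β − α) − log √(2π) = (1/(β − α)) · ∫_α^β ( −z²/(2σ²) − log(√(2π)·σ) ) dσ. -/
open Real MeasureTheory

/-- An antiderivative in `σ` of the log-density of `N(0, σ²)` at `z`. -/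
theorem hasDerivAt_log_gaussian_density_antideriv (z : ℝ) {σ : ℝ} (hσ : 0 < σ) :
    HasDerivAt
      (fun s : ℝ => z ^ 2 / 2 * s⁻¹ - (s * Real.log s - s) - Real.log (Real.sqrt (2 * π)) * s)
      (-z ^ 2 / (2 * σ ^ 2) - Real.log (Real.sqrt (2 * π) * σ)) σ := by
  have hc : Real.sqrt (2 * π) ≠ 0 := by positivity
  refine ((((hasDerivAt_inv hσ.ne').const_mul (z ^ 2 / 2)).sub
    ((Real.hasDerivAt_mul_log hσ.ne').sub (hasDerivAt_id σ))).sub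
    ((hasDerivAt_id σ).const_mul (Real.log (Real.sqrt (2 * π))))).congr_deriv ?_
  rw [Real.log_mul hc hσ.ne']
  field_simp
  ring

/-- Per-dimension exact identity (steps A.1–A.11 in the proof of Theorem 1):
the expectation of the log-density of a centered Gaussian `N(0, σ²)` at `z`,
over `σ` uniform on `[α, β]`, equals the closed-form left-hand side. -/
theorem expected_log_gaussian_density (α β z : ℝ) (hα : 0 < α) (hαβ : α < β) :
    -z ^ 2 / (2 * α * β) + 1 - (β * Real.log β - α * Real.log α) / (β - α)
        - Real.log (Real.sqrt (2 * π)) =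
      (1 / (β - α)) *
        ∫ σ in α..β, (-z ^ 2 / (2 * σ ^ 2) - Real.log (Real.sqrt (2 * π) * σ)) := by
  have hβ : 0 < β := hα.trans hαβ
  have hsub : β - α ≠ 0 := (sub_pos.2 hαβ).ne'
  have hpos : ∀ σ ∈ Set.uIcc α β, 0 < σ := fun σ hσ => by
    rw [Set.uIcc_of_le hαβ.le] at hσ
    exact hα.trans_le hσ.1
  have hcont : ContinuousOn
      (fun σ : ℝ => -z ^ 2 / (2 * σ ^ 2) - Real.log (Real.sqrt (2 * π) * σ))
      (Set.uIcc α β) := by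
    refine ContinuousOn.sub (ContinuousOn.div (by fun_prop) (by fun_prop) fun σ hσ => ?_)
      (ContinuousOn.log (by fun_prop) fun σ hσ => ?_)
    all_goals
      have := hpos σ hσ
      positivity
  rw [intervalIntegral.integral_eq_sub_of_hasDerivAt
    (fun σ hσ => hasDerivAt_log_gaussian_density_antideriv z (hpos σ hσ))
    hcont.intervalIntegrable]
  field_simp
  ring
end

section
/- Let α, β, z be real numbers with 0 < α < β. Then −z²/(2αβ) + 1 − (β·log β − α·log α)/(β − α) − log √(2π) ≤ log ∫_α^β (1/(β − α)) · (1/(√(2π)·σ)) · exp(−z²/(2σ²)) dσ. -/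
open Real MeasureTheory

/-- **Jensen's inequality** for `log` and the uniform distribution on `[a, b]`. -/
theorem average_le_log_average_exp {g : ℝ → ℝ} {a b : ℝ} (hab : a < b)
    (hg : ContinuousOn g (Set.uIcc a b)) :
    (∫ x in a..b, g x) / (b - a) ≤ Real.log ((∫ x in a..b, Real.exp (g x)) / (b - a)) := by
  have hba : 0 < b - a := sub_pos.2 hab
  set m := (∫ x in a..b, g x) / (b - a) with hm
  have hgi : IntervalIntegrable g volume a b := hg.intervalIntegrable
  have tangent : ∀ x, Real.exp m * (1 - m) + Real.exp m * g x ≤ Real.exp (g x) := fun x => by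
    have h : g x - m + 1 ≤ Real.exp (g x - m) := Real.add_one_le_exp _
    calc Real.exp m * (1 - m) + Real.exp m * g x = Real.exp m * (g x - m + 1) := by ring
      _ ≤ Real.exp m * Real.exp (g x - m) := by gcongr
      _ = Real.exp (g x) := by rw [← Real.exp_add]; ring_nf
  have hmono := intervalIntegral.integral_mono_on hab.le
    (intervalIntegrable_const.add (hgi.const_mul (Real.exp m)))
    hg.rexp.intervalIntegrable (fun x _ => tangent x)
  have hint : ∫ x in a..b, g x = m * (b - a) := by rw [hm]; field_simp
  rw [intervalIntegral.integral_add intervalIntegrable_const (hgi.const_mul _),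
    intervalIntegral.integral_const, intervalIntegral.integral_const_mul, hint, smul_eq_mul]
    at hmono
  have hexp : Real.exp m ≤ (∫ x in a..b, Real.exp (g x)) / (b - a) := by
    rw [le_div_iff₀ hba]
    linarith
  exact (Real.le_log_iff_exp_le ((Real.exp_pos m).trans_le hexp)).2 hexp

/-- The integral over the standard deviation of the centred Gaussian log-density at `z`, with an
arbitrary additive constant. -/
theorem integral_gaussian_log_density {α β : ℝ} (z c : ℝ) (hα : 0 < α) (hαβ : α < β) :
    ∫ σ in α..β, (-z ^ 2 / (2 * σ ^ 2) - Real.log σ - c) =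
      (β - α) * (-z ^ 2 / (2 * α * β) + 1
        - (β * Real.log β - α * Real.log α) / (β - α) - c) := by
  have hβ : 0 < β := hα.trans hαβ
  have hba : β - α ≠ 0 := (sub_pos.2 hαβ).ne'
  have hne : ∀ σ ∈ Set.uIcc α β, σ ≠ 0 := fun σ hσ => by
    rw [Set.uIcc_of_le hαβ.le] at hσ
    exact (hα.trans_le hσ.1).ne'
  rw [intervalIntegral.integral_eq_sub_of_hasDerivAt
    (f := fun σ => z ^ 2 / 2 * σ⁻¹ - (σ * Real.log σ - σ) - c * σ)]
  · field_simp
    ring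
  · intro σ hσ
    have h0 := hne σ hσ
    have h := (((hasDerivAt_inv h0).const_mul (z ^ 2 / 2)).sub
      ((Real.hasDerivAt_mul_log h0).sub (hasDerivAt_id σ))).sub ((hasDerivAt_id σ).const_mul c)
    refine h.congr_deriv ?_
    field_simp
    ring
  · refine ContinuousOn.intervalIntegrable ?_
    fun_prop (disch := intro σ hσ; have := hne σ hσ; positivity)

/-- Per-dimension combination of the exact identity and the Jensen step in the
proof of Theorem 1: the closed-form expression is bounded above by the log
marginal density of `z` under the hierarchical model with standard deviation
uniform on `[α, β]`. -/
theorem per_dim_lower_bound (α β z : ℝ) (hα : 0 < α) (hαβ : α < β) :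
    -z ^ 2 / (2 * α * β) + 1 - (β * Real.log β - α * Real.log α) / (β - α)
        - Real.log (Real.sqrt (2 * π)) ≤
      Real.log (∫ σ in α..β,
        (1 / (β - α)) * (1 / (Real.sqrt (2 * π) * σ)) *
          Real.exp (-z ^ 2 / (2 * σ ^ 2))) := by
  have hba : 0 < β - α := sub_pos.2 hαβ
  have hpos : ∀ σ ∈ Set.uIcc α β, 0 < σ := fun σ hσ => by
    rw [Set.uIcc_of_le hαβ.le] at hσ
    exact hα.trans_le hσ.1
  have hs : 0 < Real.sqrt (2 * π) := by positivity
  have hg : ContinuousOn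
      (fun σ => -z ^ 2 / (2 * σ ^ 2) - Real.log σ - Real.log (Real.sqrt (2 * π)))
      (Set.uIcc α β) := by
    fun_prop (disch := intro σ hσ; have := hpos σ hσ; positivity)
  have hJ := average_le_log_average_exp hαβ hg
  rw [integral_gaussian_log_density z _ hα hαβ, mul_div_cancel_left₀ _ hba.ne',
    ← intervalIntegral.integral_div] at hJ
  refine hJ.trans_eq (congrArg Real.log (intervalIntegral.integral_congr fun σ hσ => ?_))
  have hσ0 := hpos σ hσ
  simp only [Real.exp_sub, Real.exp_log hσ0, Real.exp_log hs]
  field_simp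
end
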